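/- For every natural number j, the set S_j is a smooth complete fan: its elements can be listed in cyclic angular order v_0, v_1, …, v_{d−1}, v_d = v_0 (with d = 2^{j+2}) so that det(v_i, v_{i+1}) = (v_i)₁(v_{i+1})₂ − (v_i)₂(v_{i+1})₁ = 1 for all i. (Each X_j is a smooth compact toric surface.) -/

import Mathlib

/-- The determinant `det(v,w) = v₁w₂ − v₂w₁` of a pair of lattice vectors. -/
def latDet (v w : ℤ × ℤ) : ℤ := v.1 * w.2 - v.2 * w.1

/-- `v, w ∈ S` form an adjacent pair of the fan with ray set `S` if `det(v,w) > 0` and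
no element of `S` lies in the open cone `{αv + βw : α > 0, β > 0, α, β ∈ ℝ}`. -/
def AdjacentPair (S : Set (ℤ × ℤ)) (v w : ℤ × ℤ) : Prop :=
  v ∈ S ∧ w ∈ S ∧ 0 < latDet v w ∧
    ∀ u ∈ S, ¬ ∃ α β : ℝ, 0 < α ∧ 0 < β ∧
      (u.1 : ℝ) = α * v.1 + β * w.1 ∧ (u.2 : ℝ) = α * v.2 + β * w.2

/-- A toric blow-up step replaces the ray set `S` by `S ∪ {v+w}` for an adjacent pair
`(v,w)` of `S`; this is the fan-level description of blowing up the torus fixed point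
corresponding to the two-dimensional cone spanned by `v` and `w`. -/
def BlowUpStep (S T : Set (ℤ × ℤ)) : Prop :=
  ∃ v w : ℤ × ℤ, AdjacentPair S v w ∧ T = S ∪ {v + w}

/-- `BlowUpSeq m S T` means `T` is obtained from `S` by a sequence of `m` toric
blow-up steps. -/
def BlowUpSeq : ℕ → Set (ℤ × ℤ) → Set (ℤ × ℤ) → Prop
  | 0, S, T => T = S
  | m + 1, S, T => ∃ R : Set (ℤ × ℤ), BlowUpSeq m S R ∧ BlowUpStep R T

/-- `Σ_n = {(0,−1),(1,0),(0,1),(−1,−n)}`, the set of ray generators of the fan of the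
Hirzebruch surface `F_n` (with `F_0 = ℂP¹ × ℂP¹`). -/
def hirzebruchFan (n : ℕ) : Set (ℤ × ℤ) :=
  {(0, -1), (1, 0), (0, 1), (-1, -(n : ℤ))}

/-- Mediant insertion: between each pair of consecutive entries insert their sum. -/
def mediantInsert : List (ℤ × ℤ) → List (ℤ × ℤ)
  | [] => []
  | [a] => [a]
  | a :: b :: t => a :: (a + b) :: mediantInsert (b :: t)

/-- The list `L_j`: `L_0 = [(1,0),(0,1)]` and `L_{j+1}` is obtained from `L_j` by
mediant insertion.  `L_j` encodes the rays of the fan of the toric surface `X_j`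
lying in the closed first quadrant, where `X_0 = ℂP¹ × ℂP¹` and `X_{j+1}` is the
blow-up of `X_j` at all of its torus fixed points. -/
def rayList : ℕ → List (ℤ × ℤ)
  | 0 => [(1, 0), (0, 1)]
  | j + 1 => mediantInsert (rayList j)

/-- The set `S_j = { (ε₁·a, ε₂·b) : (a,b) an entry of L_j, ε₁, ε₂ ∈ {1,−1} }`, the set
of primitive generators of the rays of the fan of the toric surface `X_j`. -/
def raySet (j : ℕ) : Set (ℤ × ℤ) :=
  {p | ∃ q ∈ rayList j, ∃ ε₁ ε₂ : ℤ, (ε₁ = 1 ∨ ε₁ = -1) ∧ (ε₂ = 1 ∨ ε₂ = -1) ∧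
    p = (ε₁ * q.1, ε₂ * q.2)}

/-- `S ⊆ ℤ²` is (the ray set of) a smooth complete fan: its elements can be listed,
without repetition and with at least three of them, in cyclic angular order
`v_0, v_1, …, v_{d−1}, v_d = v_0` such that each cyclically consecutive pair spans a
unimodular cone, `det(v_i, v_{i+1}) = 1`, and is an adjacent pair of `S` (no element
of `S` lies in the open cone it spans, which expresses that the listing is in cyclic
angular order, winding exactly once around the origin). -/
def IsSmoothCompleteFan (S : Set (ℤ × ℤ)) : Prop :=
  ∃ l : List (ℤ × ℤ), l.Nodup ∧ 3 ≤ l.length ∧ (∀ x, x ∈ S ↔ x ∈ l) ∧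
    ∀ p ∈ l.zip (l.rotate 1), latDet p.1 p.2 = 1 ∧ AdjacentPair S p.1 p.2

/-!
Mediant insertion preserves unimodularity of consecutive entries, because
`det(v, v + w) = det(v, w) = det(v + w, w)`, so `L_j` is a unimodular chain from `(1,0)` to `(0,1)`.
Followed by its mirror image in the `y`-axis it becomes a unimodular chain from `(1,0)` to `(-1,0)`
in the upper half-plane. There `det(v,w) > 0` is a transitive relation, so consecutive entries are
also angular neighbours: no entry, and no opposite of an entry, lies strictly between them.
Closing up with the opposite chain gives the cyclic listing of `S_j`.
-/

lemma latDet_self (v : ℤ × ℤ) : latDet v v = 0 := by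
  simp only [latDet]; ring

instance : Std.Refl (α := ℤ × ℤ) (0 ≤ latDet · ·) := ⟨fun v => (latDet_self v).ge⟩

lemma latDet_swap (v w : ℤ × ℤ) : latDet w v = -latDet v w := by
  simp only [latDet]; ring

lemma latDet_neg_left (v w : ℤ × ℤ) : latDet (-v) w = -latDet v w := by
  simp only [latDet, Prod.fst_neg, Prod.snd_neg]; ring

lemma latDet_neg_right (v w : ℤ × ℤ) : latDet v (-w) = -latDet v w := by
  simp only [latDet, Prod.fst_neg, Prod.snd_neg]; ring

lemma latDet_neg_neg (v w : ℤ × ℤ) : latDet (-v) (-w) = latDet v w := by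
  rw [latDet_neg_left, latDet_neg_right, neg_neg]

lemma latDet_add_right_self (v w : ℤ × ℤ) : latDet v (v + w) = latDet v w := by
  simp only [latDet, Prod.fst_add, Prod.snd_add]; ring

lemma latDet_add_left_self (v w : ℤ × ℤ) : latDet (v + w) w = latDet v w := by
  simp only [latDet, Prod.fst_add, Prod.snd_add]; ring

lemma latDet_plucker (a x y z : ℤ × ℤ) :
    latDet a y * latDet x z = latDet a x * latDet y z + latDet a z * latDet x y := by
  simp only [latDet]; ring

lemma latDet_pos_trans {a x y z : ℤ × ℤ} (hx : 0 < latDet a x) (hy : 0 < latDet a y)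
    (hz : 0 < latDet a z) (hxy : 0 < latDet x y) (hyz : 0 < latDet y z) : 0 < latDet x z := by
  have : 0 < latDet a y * latDet x z := by
    rw [latDet_plucker]; positivity
  exact pos_of_mul_pos_right this hy.le

lemma pairwise_latDet_pos_of_isChain {a : ℤ × ℤ} {l : List (ℤ × ℤ)}
    (hpos : ∀ x ∈ l, 0 < latDet a x) (hchain : l.IsChain (0 < latDet · ·)) :
    l.Pairwise (0 < latDet · ·) := by
  let R (x y : ℤ × ℤ) : Prop := 0 < latDet a x ∧ 0 < latDet a y ∧ 0 < latDet x y
  have : IsTrans (ℤ × ℤ) R := ⟨fun _ _ _ ⟨hx, hy, hxy⟩ ⟨_, hz, hyz⟩ =>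
    ⟨hx, hz, latDet_pos_trans hx hy hz hxy hyz⟩⟩
  have hR : l.IsChain R := hchain.imp_of_mem_imp fun x y hx hy hxy => ⟨hpos x hx, hpos y hy, hxy⟩
  exact hR.pairwise.imp fun h => h.2.2

/-- By Cramer's rule, `u = (det(u,w) v + det(v,u) w) / det(v,w)`. -/
lemma adjacentPair_iff {S : Set (ℤ × ℤ)} {v w : ℤ × ℤ} :
    AdjacentPair S v w ↔
      v ∈ S ∧ w ∈ S ∧ 0 < latDet v w ∧ ∀ u ∈ S, 0 < latDet v u → latDet u w ≤ 0 := by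
  refine and_congr_right fun _ => and_congr_right fun _ => and_congr_right fun hvw =>
    forall₂_congr fun u _ => ?_
  have : (0 : ℝ) < latDet v w := mod_cast hvw
  rw [← not_lt, ← not_and, not_iff_not]
  constructor
  · rintro ⟨α, β, hα, hβ, h₁, h₂⟩
    have hvu : (latDet v u : ℝ) = β * latDet v w := by
      simp only [latDet, Int.cast_sub, Int.cast_mul, h₁, h₂]; ring
    have huw : (latDet u w : ℝ) = α * latDet v w := by
      simp only [latDet, Int.cast_sub, Int.cast_mul, h₁, h₂]; ring
    rify
    rw [hvu, huw]
    exact ⟨by positivity, by positivity⟩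
  · rintro ⟨hvu, huw⟩
    rify at hvu huw
    refine ⟨latDet u w / latDet v w, latDet v u / latDet v w, by positivity, by positivity, ?_, ?_⟩
    all_goals
      field_simp
      simp only [latDet, Int.cast_sub, Int.cast_mul]
      ring

lemma AdjacentPair.neg {S : Set (ℤ × ℤ)} {v w : ℤ × ℤ} (h : AdjacentPair S v w)
    (hS : ∀ x ∈ S, -x ∈ S) : AdjacentPair S (-v) (-w) := by
  rw [adjacentPair_iff] at h ⊢
  obtain ⟨hv, hw, hvw, hcone⟩ := h
  refine ⟨hS v hv, hS w hw, by rwa [latDet_neg_neg], fun u hu => ?_⟩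
  have := hcone (-u) (hS u hu)
  rwa [latDet_neg_right, ← latDet_neg_left, latDet_neg_left u, ← latDet_neg_right] at this

lemma rel_or_rel_of_pairwise {α : Type*} {R : α → α → Prop} [Std.Refl R] {l₁ l₂ : List α}
    {v w x : α} (h : (l₁ ++ v :: w :: l₂).Pairwise R) (hx : x ∈ l₁ ++ v :: w :: l₂) :
    (R x v ∧ R x w) ∨ (R v x ∧ R w x) := by
  simp only [List.pairwise_append, List.pairwise_cons, List.mem_cons] at h
  obtain ⟨-, ⟨hv, hw, -⟩, hl₁⟩ := h
  have hvw : R v w := hv w (Or.inl rfl)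
  simp only [List.mem_append, List.mem_cons] at hx
  rcases hx with hx | rfl | rfl | hx
  · exact Or.inl ⟨hl₁ x hx v (Or.inl rfl), hl₁ x hx w (Or.inr (Or.inl rfl))⟩
  · exact Or.inl ⟨refl x, hvw⟩
  · exact Or.inr ⟨hvw, refl x⟩
  · exact Or.inr ⟨hv x (Or.inr hx), hw x hx⟩

lemma rel_of_mem_zip_rotate_one {α : Type*} {R : α → α → Prop} {a : α} {l : List α}
    (h : (a :: l ++ [a]).IsChain R) : ∀ p ∈ (a :: l).zip ((a :: l).rotate 1), R p.1 p.2 := by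
  rw [List.isChain_cons_append_singleton_iff_forall₂] at h
  rw [List.rotate_cons_succ, List.rotate_zero]
  exact fun _ hp => (List.forall₂_iff_zip.1 h).2 hp

/-- The list `l` followed by the opposites of its entries; it lists the rays of a centrally
symmetric fan, given those in a half-open half-plane. -/
def symmetrize (l : List (ℤ × ℤ)) : List (ℤ × ℤ) := l ++ l.map (-·)

lemma mem_symmetrize {l : List (ℤ × ℤ)} {x : ℤ × ℤ} : x ∈ symmetrize l ↔ x ∈ l ∨ -x ∈ l := by
  simp [symmetrize, neg_eq_iff_eq_neg]

lemma neg_mem_symmetrize {l : List (ℤ × ℤ)} {x : ℤ × ℤ} (hx : x ∈ symmetrize l) :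
    -x ∈ symmetrize l := by
  rw [mem_symmetrize] at hx ⊢
  rwa [neg_neg, or_comm]

lemma length_symmetrize (l : List (ℤ × ℤ)) : (symmetrize l).length = 2 * l.length := by
  simp [symmetrize, two_mul]

/-- The rays `a, d₁, …, dₙ` of a smooth centrally symmetric fan in the half-plane
`{x | 0 ≤ det(a,x)}`, the boundary ray through `-a` being left out. -/
structure IsUnimodularHalfFan (a : ℤ × ℤ) (D : List (ℤ × ℤ)) : Prop where
  pos : ∀ d ∈ D, 0 < latDet a d
  isChain : (a :: D ++ [-a]).IsChain (latDet · · = 1)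

namespace IsUnimodularHalfFan

variable {a : ℤ × ℤ} {D : List (ℤ × ℤ)}

lemma pairwise_pos (h : IsUnimodularHalfFan a D) : (a :: D).Pairwise (0 < latDet · ·) := by
  have hD : D.IsChain (latDet · · = 1) := h.isChain.left_of_append.tail
  exact List.pairwise_cons.2
    ⟨h.pos, pairwise_latDet_pos_of_isChain h.pos (hD.imp fun _ _ hvw => by simp [hvw])⟩

lemma latDet_nonneg (h : IsUnimodularHalfFan a D) {x : ℤ × ℤ} (hx : x ∈ a :: D) :
    0 ≤ latDet a x := by
  rcases List.mem_cons.1 hx with rfl | hx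
  exacts [(latDet_self x).ge, (h.pos x hx).le]

lemma pairwise_nonneg (h : IsUnimodularHalfFan a D) :
    (a :: D ++ [-a]).Pairwise (0 ≤ latDet · ·) := by
  refine List.pairwise_append.2 ⟨h.pairwise_pos.imp le_of_lt, List.pairwise_singleton _ _, ?_⟩
  intro x hx y hy
  rw [List.mem_singleton.1 hy, latDet_neg_right, ← latDet_swap]
  exact h.latDet_nonneg hx

lemma ne_zero (h : IsUnimodularHalfFan a D) : a ≠ 0 := by
  rintro rfl
  cases D <;> simpa [latDet] using h.isChain

lemma neg_notMem (h : IsUnimodularHalfFan a D) {x : ℤ × ℤ} (hx : x ∈ a :: D) : -x ∉ a :: D := by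
  intro hnx
  have hax : latDet a x = 0 := by
    have := h.latDet_nonneg hnx
    rw [latDet_neg_right] at this
    linarith [h.latDet_nonneg hx]
  have eq_of_latDet_eq_zero {y : ℤ × ℤ} (hy : y ∈ a :: D) (hay : latDet a y = 0) : y = a :=
    (List.mem_cons.1 hy).resolve_right fun hyD => (h.pos y hyD).ne' hay
  have hxa : x = a := eq_of_latDet_eq_zero hx hax
  have hnxa : -x = a := eq_of_latDet_eq_zero hnx (by rw [latDet_neg_right, hax, neg_zero])
  exact h.ne_zero (self_eq_neg.1 (hnxa.symm.trans (congrArg _ hxa)))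

lemma nodup_symmetrize (h : IsUnimodularHalfFan a D) : (symmetrize (a :: D)).Nodup := by
  have hnodup : (a :: D).Nodup :=
    h.pairwise_pos.imp fun {x y} hxy => by
      rintro rfl
      exact hxy.ne' (latDet_self x)
  refine hnodup.append (hnodup.map neg_injective) fun x hx hnx => ?_
  obtain ⟨y, hy, rfl⟩ := List.mem_map.1 hnx
  exact h.neg_notMem hy hx

lemma isChain_adjacentPair (h : IsUnimodularHalfFan a D) :
    (a :: D ++ [-a]).IsChain
      (fun v w => latDet v w = 1 ∧ AdjacentPair {x | x ∈ symmetrize (a :: D)} v w) := by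
  have hsub : a :: D ++ [-a] ⊆ symmetrize (a :: D) :=
    List.append_subset.2 ⟨List.subset_append_left _ _, by simp [mem_symmetrize]⟩
  refine List.isChain_iff_forall_rel_of_append_cons_cons.2 fun v w l₁ l₂ hl => ?_
  have hvw : latDet v w = 1 := List.isChain_iff_forall_rel_of_append_cons_cons.1 h.isChain hl
  have hsameSide (x : ℤ × ℤ) (hx : x ∈ a :: D) :
      (0 ≤ latDet x v ∧ 0 ≤ latDet x w) ∨ (0 ≤ latDet v x ∧ 0 ≤ latDet w x) :=
    rel_or_rel_of_pairwise (hl ▸ h.pairwise_nonneg) (hl ▸ List.mem_append_left _ hx)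
  refine ⟨hvw, adjacentPair_iff.2 ⟨hsub (by simp [hl]), hsub (by simp [hl]), hvw ▸ one_pos,
    fun u hu hvu => ?_⟩⟩
  rw [Set.mem_ofPred_eq, mem_symmetrize] at hu
  rcases hu with hu | hu
  · have := hsameSide u hu
    rw [latDet_swap v u, latDet_swap u w] at this
    lia
  · have := hsameSide (-u) hu
    simp only [latDet_neg_left, latDet_neg_right] at this
    rw [latDet_swap v u, latDet_swap u w] at this
    lia

lemma isChain_symmetrize (h : IsUnimodularHalfFan a D) :
    (symmetrize (a :: D) ++ [a]).IsChain
      (fun v w => latDet v w = 1 ∧ AdjacentPair {x | x ∈ symmetrize (a :: D)} v w) := by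
  have hneg := List.isChain_map_of_isChain
    (S := fun v w => latDet v w = 1 ∧ AdjacentPair {x | x ∈ symmetrize (a :: D)} v w) (-·)
    (fun v w ⟨hvw, hadj⟩ =>
      ⟨(latDet_neg_neg v w).trans hvw, hadj.neg fun _ => neg_mem_symmetrize⟩) h.isChain_adjacentPair
  have hsplit : symmetrize (a :: D) ++ [a] = a :: D ++ -a :: (D.map (-·) ++ [a]) := by
    simp [symmetrize]
  rw [hsplit, List.isChain_split]
  exact ⟨h.isChain_adjacentPair, by simpa using hneg⟩

lemma latDet_eq_one_and_adjacentPair (h : IsUnimodularHalfFan a D) :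
    ∀ p ∈ (symmetrize (a :: D)).zip ((symmetrize (a :: D)).rotate 1),
      latDet p.1 p.2 = 1 ∧ AdjacentPair {x | x ∈ symmetrize (a :: D)} p.1 p.2 :=
  rel_of_mem_zip_rotate_one h.isChain_symmetrize

theorem isSmoothCompleteFan (h : IsUnimodularHalfFan a D) :
    IsSmoothCompleteFan {x | x ∈ symmetrize (a :: D)} := by
  have hD : D ≠ [] := by
    rintro rfl
    have : latDet a (-a) = 1 := by simpa using h.isChain
    simp [latDet_neg_right, latDet_self] at this
  have hlen : 3 ≤ (symmetrize (a :: D)).length := by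
    have := List.length_pos_iff.2 hD
    rw [length_symmetrize, List.length_cons]
    lia
  exact ⟨_, h.nodup_symmetrize, hlen, fun _ => Iff.rfl, h.latDet_eq_one_and_adjacentPair⟩

end IsUnimodularHalfFan

/-- Reflection in the `y`-axis. -/
def reflect (v : ℤ × ℤ) : ℤ × ℤ := (-v.1, v.2)

lemma latDet_reflect_reflect (v w : ℤ × ℤ) : latDet (reflect v) (reflect w) = latDet w v := by
  simp only [latDet, reflect]; ring

lemma reflect_reflect (v : ℤ × ℤ) : reflect (reflect v) = v := by
  simp [reflect]

lemma mem_map_reflect {l : List (ℤ × ℤ)} {x : ℤ × ℤ} : x ∈ l.map reflect ↔ reflect x ∈ l :=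
  List.mem_map_of_involutive reflect_reflect

/-- The rays in the open upper half-plane of the mirror-symmetric fan whose rays in the open first
quadrant are those of `E`, in angular order. -/
def upperRays (E : List (ℤ × ℤ)) : List (ℤ × ℤ) := E ++ (0, 1) :: (E.map reflect).reverse

lemma mem_upperRays {E : List (ℤ × ℤ)} {x : ℤ × ℤ} :
    x ∈ upperRays E ↔ x ∈ E ∨ x = (0, 1) ∨ reflect x ∈ E := by
  simp only [upperRays, List.mem_append, List.mem_cons, List.mem_reverse, mem_map_reflect]

lemma length_upperRays (E : List (ℤ × ℤ)) : (upperRays E).length = 2 * E.length + 1 := by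
  simp only [upperRays, List.length_append, List.length_cons, List.length_reverse,
    List.length_map]
  ring

theorem isUnimodularHalfFan_upperRays {E : List (ℤ × ℤ)} (hpos : ∀ e ∈ E, 0 < e.2)
    (hchain : ((1, 0) :: E ++ [(0, 1)]).IsChain (latDet · · = 1)) :
    IsUnimodularHalfFan (1, 0) (upperRays E) where
  pos d hd := by
    have : latDet (1, 0) d = d.2 := by simp [latDet]
    rw [this]
    rcases mem_upperRays.1 hd with hd | rfl | hd
    exacts [hpos d hd, one_pos, hpos (reflect d) hd]
  isChain := by
    have hmirror : (((1, 0) :: E ++ [(0, 1)]).map reflect).reverse.IsChain (latDet · · = 1) := by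
      simpa only [List.isChain_reverse, List.isChain_map, latDet_reflect_reflect] using hchain
    have hsplit : (1, 0) :: upperRays E ++ [-(1, 0)] =
        (1, 0) :: E ++ (0, 1) :: ((E.map reflect).reverse ++ [(-1, 0)]) := by simp [upperRays]
    rw [hsplit, List.isChain_split]
    exact ⟨hchain, by simpa [reflect] using hmirror⟩

lemma length_mediantInsert : ∀ l : List (ℤ × ℤ), (mediantInsert l).length = 2 * l.length - 1
  | [] => rfl
  | [_] => rfl
  | a :: b :: t => by
    simp only [mediantInsert, List.length_cons, length_mediantInsert (b :: t)]
    lia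

lemma isChain_mediantInsert {n : ℤ} : ∀ {l : List (ℤ × ℤ)}, l.IsChain (latDet · · = n) →
    (mediantInsert l).IsChain (latDet · · = n)
  | [], _ => .nil
  | [_], _ => .singleton _
  | [a, b], h => by
    simpa [mediantInsert, latDet_add_left_self, latDet_add_right_self] using h
  | a :: b :: c :: t, h => by
    rw [List.isChain_cons_cons] at h
    have ih := isChain_mediantInsert h.2
    simp only [mediantInsert, List.isChain_cons_cons, latDet_add_left_self,
      latDet_add_right_self] at ih ⊢
    exact ⟨h.1, h.1, ih⟩

lemma exists_mediantInsert_eq_cons_append {P : ℤ × ℤ → Prop}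
    (hadd : ∀ v w, P v → P w → P (v + w)) {a b : ℤ × ℤ} (ha : ∀ v, P v → P (a + v)) (hb : P b)
    {E : List (ℤ × ℤ)} (hE : ∀ e ∈ E, P e) :
    ∃ E', mediantInsert (a :: E ++ [b]) = a :: E' ++ [b] ∧ ∀ e ∈ E', P e := by
  induction E generalizing a with
  | nil => exact ⟨[a + b], rfl, by simpa using ha b hb⟩
  | cons c E ih =>
    obtain ⟨hc, hE⟩ := List.forall_mem_cons.1 hE
    obtain ⟨E', hins, hE'⟩ := ih (fun v => hadd c v hc) hE
    refine ⟨(a + c) :: c :: E', ?_, ?_⟩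
    · simpa [mediantInsert] using hins
    · simpa using ⟨ha c hc, hc, by simpa using hE'⟩

lemma length_rayList (j : ℕ) : (rayList j).length = 2 ^ j + 1 := by
  induction j with
  | zero => rfl
  | succ j ih => rw [rayList, length_mediantInsert, ih, pow_succ]; lia

lemma isChain_rayList (j : ℕ) : (rayList j).IsChain (latDet · · = 1) := by
  induction j with
  | zero => simp [rayList, latDet]
  | succ j ih => exact isChain_mediantInsert ih

lemma exists_rayList_eq (j : ℕ) :
    ∃ E, rayList j = (1, 0) :: E ++ [(0, 1)] ∧ ∀ e ∈ E, 0 < e.2 := by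
  induction j with
  | zero => exact ⟨[], rfl, by simp⟩
  | succ j ih =>
    obtain ⟨E, hj, hE⟩ := ih
    rw [rayList, hj]
    exact exists_mediantInsert_eq_cons_append (P := fun e => 0 < e.2)
      (fun _ _ => add_pos) (fun v hv => by simpa using hv) one_pos hE

lemma mem_raySet_iff {j : ℕ} {x : ℤ × ℤ} :
    x ∈ raySet j ↔
      (x ∈ rayList j ∨ reflect x ∈ rayList j) ∨ (-x ∈ rayList j ∨ reflect (-x) ∈ rayList j) := by
  constructor
  · rintro ⟨q, hq, ε₁, ε₂, rfl | rfl, rfl | rfl, rfl⟩ <;> simp [reflect, hq]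
  · rintro ((h | h) | (h | h))
    · exact ⟨x, h, 1, 1, by simp⟩
    · exact ⟨_, h, -1, 1, by simp [reflect]⟩
    · exact ⟨_, h, -1, -1, by simp⟩
    · exact ⟨_, h, 1, -1, by simp [reflect]⟩

lemma mem_raySet_iff_mem_symmetrize {j : ℕ} {E : List (ℤ × ℤ)}
    (hE : rayList j = (1, 0) :: E ++ [(0, 1)]) (x : ℤ × ℤ) :
    x ∈ raySet j ↔ x ∈ symmetrize ((1, 0) :: upperRays E) := by
  have hx : reflect x = (1, 0) ↔ -x = (1, 0) := by simp [reflect, Prod.ext_iff]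
  have hnx : reflect (-x) = (1, 0) ↔ x = (1, 0) := by simp [reflect, Prod.ext_iff]
  have hx' : reflect x = (0, 1) ↔ x = (0, 1) := by simp [reflect, Prod.ext_iff]
  have hnx' : reflect (-x) = (0, 1) ↔ -x = (0, 1) := by simp [reflect, Prod.ext_iff]
  simp only [mem_raySet_iff, mem_symmetrize, mem_upperRays, hE, List.mem_append, List.mem_cons,
    List.not_mem_nil, or_false, hx, hnx, hx', hnx']
  tauto

/-- For every natural number `j`, the set `S_j` is a smooth complete
fan: its elements can be listed in cyclic angular order `v_0, …, v_{d−1}, v_d = v_0`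
with `d = 2^{j+2}` so that `det(v_i, v_{i+1}) = 1` for all `i`.  (Each `X_j` is a
smooth compact toric surface.) -/
theorem raySet_isSmoothCompleteFan (j : ℕ) :
    IsSmoothCompleteFan (raySet j) ∧
      ∃ l : List (ℤ × ℤ), l.Nodup ∧ l.length = 2 ^ (j + 2) ∧
        (∀ x, x ∈ raySet j ↔ x ∈ l) ∧
        ∀ p ∈ l.zip (l.rotate 1), latDet p.1 p.2 = 1 ∧ AdjacentPair (raySet j) p.1 p.2 := by
  obtain ⟨E, hE, hpos⟩ := exists_rayList_eq j
  have hfan : IsUnimodularHalfFan (1, 0) (upperRays E) :=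
    isUnimodularHalfFan_upperRays hpos (hE ▸ isChain_rayList j)
  have hset : raySet j = {x | x ∈ symmetrize ((1, 0) :: upperRays E)} :=
    Set.ext (mem_raySet_iff_mem_symmetrize hE)
  have hlen : (symmetrize ((1, 0) :: upperRays E)).length = 2 ^ (j + 2) := by
    have hElen : E.length + 1 = 2 ^ j := by simpa [hE] using length_rayList j
    rw [length_symmetrize, List.length_cons, length_upperRays, pow_add, ← hElen]
    ring
  rw [hset]
  exact ⟨hfan.isSmoothCompleteFan, _, hfan.nodup_symmetrize, hlen, fun _ => Iff.rfl,
    hfan.latDet_eq_one_and_adjacentPair⟩
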